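/- With the Lie-algebra setup below (Case A), let the bracket be [x₁,x₂] = λ₁x₁ + λ₂x₂, [x₂,x₃] = ν₂x₂ − λ₁x₃, [x₁,x₃] = ν₂x₁ + λ₂x₃ for real constants λ₁, λ₂, ν₂. Then: (1) this bracket satisfies the Jacobi identity; (2) R(x₁,x₂,x₁,x₂) = R(x₁,x₃,x₁,x₃) = R(x₂,x₃,x₂,x₃) = λ₁² + λ₂² + ν₂², and all curvature components R(xᵢ,xⱼ,xₖ,xₗ) not obtained from these by the curvature symmetries vanish; (3) ρ(xᵢ,xⱼ) = −2(λ₁² + λ₂² + ν₂²) if i = j and 0 if i ≠ j, the scalar curvature is τ = −6(λ₁² + λ₂² + ν₂²), and ρ = (τ/3)·g, i.e. the manifold is Einstein; (4) for every pair of linearly independent vectors x, y ∈ ℝ³ the sectional curvature k(x,y) = R(x,y,x,y)/(g(x,x)g(y,y) − g(x,y)²) equals λ₁² + λ₂² + ν₂². -/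

import Mathlib

open scoped BigOperators

/-- The underlying vector space ℝ³. -/
abbrev V := Fin 3 → ℝ

/-- The standard basis `x₁, x₂, x₃` of ℝ³ (indexed from 0). -/
def e (i : Fin 3) : V := Pi.single i 1

/-- The standard inner product `g` on ℝ³ (the basis `e` is orthonormal). -/
def ip (x y : V) : ℝ := ∑ i, x i * y i

/-- The circulant structure `Q`: `Q x₁ = x₂`, `Q x₂ = x₃`, `Q x₃ = x₁`. -/
def Qv (x : V) : V := fun j => x (j - 1)

/-- The associated metric `g̃(y,z) = g(y,Qz) + g(Qy,z)`. -/
def gtil (x y : V) : ℝ := ip x (Qv y) + ip (Qv x) y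

/-- Bilinearity of a map `V → V → V`. -/
def Bilin (f : V → V → V) : Prop :=
  (∀ (a : ℝ) (x y z : V), f (a • x + y) z = a • f x z + f y z) ∧
  (∀ (a : ℝ) (x y z : V), f x (a • y + z) = a • f x y + f x z)

/-- Skew-symmetry of a map `V → V → V`. -/
def Skew (f : V → V → V) : Prop := ∀ x y, f x y = - f y x

/-- The Jacobi identity for a bracket. -/
def Jacobi (br : V → V → V) : Prop :=
  ∀ x y z, br x (br y z) + br y (br z x) + br z (br x y) = 0

/-- The Koszul formula determining the Levi-Civita connection `∇` of the
left-invariant metric `g` on the basis: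
`2g(∇_{xᵢ}xⱼ, xₖ) = g([xᵢ,xⱼ],xₖ) + g([xₖ,xᵢ],xⱼ) + g([xₖ,xⱼ],xᵢ)`. -/
def Koszul (br nabla : V → V → V) : Prop :=
  ∀ i j k : Fin 3, 2 * ip (nabla (e i) (e j)) (e k) =
    ip (br (e i) (e j)) (e k) + ip (br (e k) (e i)) (e j) + ip (br (e k) (e j)) (e i)

/-- The curvature operator `R(x,y)z = ∇ₓ∇_y z − ∇_y∇ₓz − ∇_{[x,y]}z`. -/
def Rop (br nabla : V → V → V) (x y z : V) : V :=
  nabla x (nabla y z) - nabla y (nabla x z) - nabla (br x y) z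

/-- The curvature tensor of type (0,4): `R(x,y,z,u) = g(R(x,y)z, u)`. -/
def Rten (br nabla : V → V → V) (x y z u : V) : ℝ := ip (Rop br nabla x y z) u

/-- The Ricci tensor `ρ(y,z) = Σᵢ R(xᵢ,y,z,xᵢ)`. -/
def ricci (br nabla : V → V → V) (y z : V) : ℝ := ∑ i, Rten br nabla (e i) y z (e i)

/-- The scalar curvature `τ = Σᵢ ρ(xᵢ,xᵢ)`. -/
def scalc (br nabla : V → V → V) : ℝ := ∑ i, ricci br nabla (e i) (e i)

/-- The fundamental tensor `F(x,y,z) = −g̃(∇ₓy, z) − g̃(y, ∇ₓz)`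
(the covariant derivative of `g̃`, which has constant components in this frame). -/
def Fop (nabla : V → V → V) (x y z : V) : ℝ := -(gtil (nabla x y) z) - gtil y (nabla x z)

/-- The Lee form `θₖ = Σᵢ F(xᵢ,xᵢ,xₖ)`. -/
def lee (nabla : V → V → V) (k : Fin 3) : ℝ := ∑ i, Fop nabla (e i) (e i) (e k)

/-- The Lee form `θ*ₖ = Σᵢ F(xᵢ,Qxᵢ,xₖ)`. -/
def leeStar (nabla : V → V → V) (k : Fin 3) : ℝ := ∑ i, Fop nabla (e i) (Qv (e i)) (e k)


lemma V_decomp (x : V) : x = x 0 • e 0 + (x 1 • e 1 + (x 2 • e 2 + 0)) := by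
  ext i; fin_cases i <;> simp [e]

lemma Bilin.zero_left {f : V → V → V} (h : Bilin f) (z : V) : f 0 z = 0 := by
  have := h.1 1 0 0 z
  simpa using this

lemma Bilin.zero_right {f : V → V → V} (h : Bilin f) (z : V) : f z 0 = 0 := by
  have := h.2 1 z 0 0
  simpa using this

lemma Bilin.ext_basis {f g : V → V → V} (hf : Bilin f) (hg : Bilin g)
    (h : ∀ i j, f (e i) (e j) = g (e i) (e j)) (x y : V) : f x y = g x y := by
  rw [V_decomp x, V_decomp y]
  simp only [hf.1, hf.2, hg.1, hg.2, hf.zero_left, hg.zero_left, hf.zero_right, hg.zero_right, h]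

def Fv (l1 l2 n2 : ℝ) : V := ![l2, -l1, -n2]

lemma br_formula (br : V → V → V) (hbil : Bilin br) (hskew : Skew br) (l1 l2 n2 : ℝ)
    (h12 : br (e 0) (e 1) = l1 • e 0 + l2 • e 1)
    (h23 : br (e 1) (e 2) = n2 • e 1 - l1 • e 2)
    (h13 : br (e 0) (e 2) = n2 • e 0 + l2 • e 2) (x y : V) :
    br x y = ip (Fv l1 l2 n2) x • y - ip (Fv l1 l2 n2) y • x := by
  have hs : ∀ x, br x x = 0 := fun x => self_eq_neg.mp (hskew x x)
  refine Bilin.ext_basis (g := fun x y => ip (Fv l1 l2 n2) x • y - ip (Fv l1 l2 n2) y • x)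
    hbil ⟨?_, ?_⟩ ?_ x y
  · intro a x y z; ext i; simp [ip, Fin.sum_univ_three]; ring
  · intro a x y z; ext i; simp [ip, Fin.sum_univ_three]; ring
  · have h21 := hskew (e 1) (e 0)
    have h32 := hskew (e 2) (e 1)
    have h31 := hskew (e 2) (e 0)
    rw [h12] at h21
    rw [h23] at h32
    rw [h13] at h31
    intro i j
    fin_cases i <;> fin_cases j <;>
      simp [hs, h12, h23, h13, h21, h32, h31] <;> ext k <;> fin_cases k <;>
      simp [ip, Fv, e, Fin.sum_univ_three]

lemma nabla_formula (br nabla : V → V → V) (hn : Bilin nabla) (hkos : Koszul br nabla) (F : V)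
    (hbr : ∀ x y, br x y = ip F x • y - ip F y • x) (x y : V) :
    nabla x y = ip x y • F - ip F y • x := by
  refine Bilin.ext_basis (g := fun x y => ip x y • F - ip F y • x) hn ⟨?_, ?_⟩ ?_ x y
  · intro a x y z; ext i; simp [ip, Fin.sum_univ_three]; ring
  · intro a x y z; ext i; simp [ip, Fin.sum_univ_three]; ring
  · intro i j
    ext k
    have h := hkos i j k
    have h1 : ∀ (v : V) (k : Fin 3), ip v (e k) = v k := by
      intro v k; simp [ip, e, Pi.single_apply]
    simp only [hbr, h1, Pi.sub_apply, Pi.smul_apply, smul_eq_mul] at h ⊢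
    have hsym : ∀ i j : Fin 3, (e i) j = (e j) i := by
      intro i j; simp [e, Pi.single_apply, eq_comm]
    rw [hsym k i, hsym k j, hsym j i] at h
    rw [hsym i k, hsym k i] 
    linear_combination h / 2

lemma R_formula (br nabla : V → V → V) (F : V)
    (hbr : ∀ x y, br x y = ip F x • y - ip F y • x)
    (hna : ∀ x y, nabla x y = ip x y • F - ip F y • x) (x y z u : V) :
    Rten br nabla x y z u = ip F F * (ip x z * ip y u - ip y z * ip x u) := by
  simp only [Rten, Rop, hbr, hna]
  simp [ip, Fin.sum_univ_three]
  ring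

/-- Case A: for the bracket `[x₁,x₂] = λ₁x₁ + λ₂x₂`,
`[x₂,x₃] = ν₂x₂ − λ₁x₃`, `[x₁,x₃] = ν₂x₁ + λ₂x₃`: it satisfies the Jacobi identity;
the basic curvature components equal `λ₁² + λ₂² + ν₂²` and the remaining independent
components vanish; `ρ = (τ/3)g` with `τ = −6(λ₁² + λ₂² + ν₂²)` (Einstein); and every
2-plane has sectional curvature `λ₁² + λ₂² + ν₂²`. -/
theorem case_A_properties
    (br : V → V → V) (hbil : Bilin br) (hskew : Skew br)
    (nabla : V → V → V) (hnbil : Bilin nabla) (hkos : Koszul br nabla)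
    (l1 l2 n2 : ℝ)
    (h12 : br (e 0) (e 1) = l1 • e 0 + l2 • e 1)
    (h23 : br (e 1) (e 2) = n2 • e 1 - l1 • e 2)
    (h13 : br (e 0) (e 2) = n2 • e 0 + l2 • e 2) :
    -- (1) the Jacobi identity holds
    Jacobi br ∧
    -- (2) the curvature components
    (Rten br nabla (e 0) (e 1) (e 0) (e 1) = l1^2 + l2^2 + n2^2 ∧
     Rten br nabla (e 0) (e 2) (e 0) (e 2) = l1^2 + l2^2 + n2^2 ∧
     Rten br nabla (e 1) (e 2) (e 1) (e 2) = l1^2 + l2^2 + n2^2 ∧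
     Rten br nabla (e 0) (e 1) (e 0) (e 2) = 0 ∧
     Rten br nabla (e 0) (e 1) (e 1) (e 2) = 0 ∧
     Rten br nabla (e 0) (e 2) (e 1) (e 2) = 0) ∧
    -- (3) Ricci tensor, scalar curvature, Einstein condition
    ((∀ i j : Fin 3, ricci br nabla (e i) (e j) =
        if i = j then -2 * (l1^2 + l2^2 + n2^2) else 0) ∧
     scalc br nabla = -6 * (l1^2 + l2^2 + n2^2) ∧
     (∀ x y : V, ricci br nabla x y = (scalc br nabla / 3) * ip x y)) ∧
    -- (4) constant sectional curvature
    (∀ x y : V, LinearIndependent ℝ ![x, y] →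
      Rten br nabla x y x y / (ip x x * ip y y - (ip x y)^2) = l1^2 + l2^2 + n2^2) := by
  have hbr := br_formula br hbil hskew l1 l2 n2 h12 h23 h13
  have hna := nabla_formula br nabla hnbil hkos _ hbr
  have hR := R_formula br nabla _ hbr hna
  have hF : ip (Fv l1 l2 n2) (Fv l1 l2 n2) = l1^2 + l2^2 + n2^2 := by
    simp [ip, Fv, Fin.sum_univ_three]; ring
  rw [hF] at hR
  have he : ∀ i j : Fin 3, ip (e i) (e j) = if i = j then 1 else 0 := by
    intro i j; simp [ip, e, Pi.single_apply, eq_comm]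
  have hric : ∀ x y : V, ricci br nabla x y = -2 * (l1^2 + l2^2 + n2^2) * ip x y := by
    intro x y
    simp only [ricci, hR]
    simp [ip, e, Fin.sum_univ_three]
    ring
  have hsc : scalc br nabla = -6 * (l1^2 + l2^2 + n2^2) := by
    simp only [scalc, hric, he, Fin.sum_univ_three]
    simp
    ring
  refine ⟨?_, ?_, ⟨?_, hsc, ?_⟩, ?_⟩
  · intro x y z
    simp only [hbr]
    ext i
    simp [ip, Fin.sum_univ_three]
    ring
  · simp only [hR, he]
    simp
  · intro i j
    rw [hric, he]
    split_ifs <;> simp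
  · intro x y
    rw [hric, hsc]
    ring
  · intro x y hli
    rw [hR]
    have hne : ip x x * ip y y - (ip x y)^2 ≠ 0 := by
      intro h0
      rw [LinearIndependent.pair_iff] at hli
      have hx : ip x x ≠ 0 := by
        intro hx
        have hx0 : x = 0 := by
          simp only [ip, Fin.sum_univ_three] at hx
          ext i
          fin_cases i <;> simp <;>
            nlinarith [mul_self_nonneg (x 0), mul_self_nonneg (x 1), mul_self_nonneg (x 2)]
        have := (hli 1 0 (by simp [hx0])).1
        norm_num at this
      have hw : ip (ip x y • x - ip x x • y) (ip x y • x - ip x x • y) = 0 := by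
        have : ip (ip x y • x - ip x x • y) (ip x y • x - ip x x • y)
            = ip x x * (ip x x * ip y y - (ip x y)^2) := by
          simp [ip, Fin.sum_univ_three]; ring
        rw [this, h0, mul_zero]
      have hw0 : ip x y • x + (- ip x x) • y = 0 := by
        rw [neg_smul, ← sub_eq_add_neg]
        generalize ip x y • x - ip x x • y = w at hw
        simp only [ip, Fin.sum_univ_three] at hw
        ext i
        fin_cases i <;> simp <;>
          nlinarith [mul_self_nonneg (w 0), mul_self_nonneg (w 1), mul_self_nonneg (w 2)]
      exact hx (neg_eq_zero.mp (hli _ _ hw0).2)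
    have hsym : ip y x = ip x y := by simp [ip, mul_comm]
    rw [hsym, div_eq_iff hne]
    ring
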